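/- arXiv:1506.01806 — 2 statements merged into one kernel-verified Lean document; each statement's English description precedes it below -/
import Mathlib

section
/- Let H be a complex Hilbert space and N a bounded normal operator on H (i.e. N commutes with its adjoint). Then Stab(N) = { x ∈ H : ‖Nⁿ x‖ → 0 as n → ∞ } is a closed linear subspace of H. -/
open Filter Topology

noncomputable section

/-- A nonnegative log-convex sequence that tends to zero is antitone. -/
theorem antitone_of_sq_le_mul_of_tendsto_zero {a : ℕ → ℝ} (ha : ∀ n, 0 ≤ a n)
    (hconv : ∀ n, a (n + 1) ^ 2 ≤ a n * a (n + 2)) (hlim : Tendsto a atTop (𝓝 0)) :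
    Antitone a := by
  refine antitone_nat_of_succ_le fun m => ?_
  by_contra! hm
  have hstep : ∀ k, a (m + k) < a (m + k + 1) := by
    intro k
    induction k with
    | zero => exact hm
    | succ k ih =>
      by_contra! hle
      have hc : a (m + k + 1) ^ 2 ≤ a (m + k) * a (m + k + 2) := hconv (m + k)
      have hle' : a (m + k + 2) ≤ a (m + k + 1) := hle
      nlinarith [mul_le_mul_of_nonneg_left hle' (ha (m + k)), ha (m + k)]
  have hmono : Monotone fun k => a (k + m) :=
    monotone_nat_of_le_succ fun k => by
      have := (hstep k).le
      rwa [show m + k + 1 = k + 1 + m by ring, add_comm m k] at this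
  have hle : a (1 + m) ≤ 0 := hmono.ge_of_tendsto ((tendsto_add_atTop_iff_nat m).2 hlim) 1
  rw [add_comm] at hle
  linarith [ha m]

section

variable {H : Type*} [NormedAddCommGroup H] [InnerProductSpace ℂ H]

/-- The vectors whose orbit under the powers of `N` tends to zero. -/
def stableSubspace (N : H →L[ℂ] H) : Submodule ℂ H where
  carrier := {x | Tendsto (fun n : ℕ => ‖(N ^ n) x‖) atTop (𝓝 0)}
  zero_mem' := by simp
  add_mem' {x y} hx hy := by
    simp only [Set.mem_ofPred_eq, ← tendsto_zero_iff_norm_tendsto_zero, map_add] at hx hy ⊢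
    simpa using hx.add hy
  smul_mem' c x hx := by
    simp only [Set.mem_ofPred_eq, ← tendsto_zero_iff_norm_tendsto_zero, map_smul] at hx ⊢
    simpa using hx.const_smul c

theorem mem_stableSubspace {N : H →L[ℂ] H} {x : H} :
    x ∈ stableSubspace N ↔ Tendsto (fun n : ℕ => ‖(N ^ n) x‖) atTop (𝓝 0) :=
  Iff.rfl

/-- If every power of `N` is contractive on the stable subspace, then that subspace is closed. -/
theorem isClosed_stableSubspace {N : H →L[ℂ] H}
    (hcontr : ∀ x ∈ stableSubspace N, ∀ n : ℕ, ‖(N ^ n) x‖ ≤ ‖x‖) :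
    IsClosed (stableSubspace N : Set H) := by
  have hcl : ∀ z ∈ (stableSubspace N).topologicalClosure, ∀ n : ℕ, ‖(N ^ n) z‖ ≤ ‖z‖ := by
    intro z hz n
    have hclosed : IsClosed {z : H | ‖(N ^ n) z‖ ≤ ‖z‖} :=
      isClosed_le (N ^ n).continuous.norm continuous_norm
    exact closure_minimal (fun x hx => hcontr x hx n) hclosed hz
  refine isClosed_of_closure_subset fun y hy => ?_
  rw [SetLike.mem_coe, mem_stableSubspace, Metric.tendsto_atTop]
  intro ε hε
  obtain ⟨x, hx, hxy⟩ := Metric.mem_closure_iff.1 hy (ε / 2) (half_pos hε)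
  obtain ⟨n₀, hn₀⟩ := Metric.tendsto_atTop.1 (mem_stableSubspace.1 hx) (ε / 2) (half_pos hε)
  refine ⟨n₀, fun n hn => ?_⟩
  have hsmall := hn₀ n hn
  have hdiff := hcl (y - x)
    (sub_mem hy ((stableSubspace N).le_topologicalClosure hx)) n
  simp only [dist_zero_right, norm_norm] at hsmall ⊢
  rw [dist_eq_norm] at hxy
  calc ‖(N ^ n) y‖ = ‖(N ^ n) (y - x) + (N ^ n) x‖ := by rw [← map_add, sub_add_cancel]
    _ ≤ ‖(N ^ n) (y - x)‖ + ‖(N ^ n) x‖ := norm_add_le _ _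
    _ < ε := by linarith

theorem norm_sq_apply_le_of_isStarNormal [CompleteSpace H] (N : H →L[ℂ] H) [IsStarNormal N]
    (x : H) : ‖N x‖ ^ 2 ≤ ‖x‖ * ‖N (N x)‖ := by
  rw [ContinuousLinearMap.isStarNormal_iff_norm_eq_adjoint.1 ‹_› (N x)]
  calc ‖N x‖ ^ 2 = ‖inner ℂ (N x) (N x)‖ := by simp [inner_self_eq_norm_sq_to_K]
    _ = ‖inner ℂ x (ContinuousLinearMap.adjoint N (N x))‖ := by
      rw [ContinuousLinearMap.adjoint_inner_right]
    _ ≤ _ := norm_inner_le_norm _ _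

theorem norm_pow_apply_le_of_mem_stableSubspace [CompleteSpace H] (N : H →L[ℂ] H)
    [IsStarNormal N] {x : H} (hx : x ∈ stableSubspace N) (n : ℕ) : ‖(N ^ n) x‖ ≤ ‖x‖ := by
  have hanti : Antitone fun n : ℕ => ‖(N ^ n) x‖ :=
    antitone_of_sq_le_mul_of_tendsto_zero (fun _ => norm_nonneg _)
      (fun n => by
        simpa [pow_succ'] using norm_sq_apply_le_of_isStarNormal N ((N ^ n) x)) hx
  simpa using hanti n.zero_le

end

theorem stab_of_normal_closed_subspace
    {H : Type*} [NormedAddCommGroup H] [InnerProductSpace ℂ H] [CompleteSpace H]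
    (N : H →L[ℂ] H)
    (hN : N ∘L ContinuousLinearMap.adjoint N = ContinuousLinearMap.adjoint N ∘L N) :
    ∃ K : Submodule ℂ H,
      (K : Set H) = {x : H | Tendsto (fun n : ℕ => ‖(N ^ n) x‖) atTop (𝓝 0)} ∧
      IsClosed (K : Set H) := by
  have : IsStarNormal N := ⟨hN.symm⟩
  exact ⟨stableSubspace N, rfl,
    isClosed_stableSubspace fun _ hx n => norm_pow_apply_le_of_mem_stableSubspace N hx n⟩
end
end

section
/- Let H be a nontrivial complex Hilbert space and N a bounded normal operator on H with N ≠ 0. Suppose that for every c > 0 the set Stab(c • N) = { x ∈ H : cⁿ · ‖Nⁿ x‖ → 0 as n → ∞ } is either {0} or dense in H. Then there exists r > 0 such that N* ∘ N = r² • (identity); equivalently, (1/r) • N is a unitary operator. -/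
open Filter Topology

noncomputable section

section NormalOperator

open ContinuousLinearMap

variable {H : Type*} [NormedAddCommGroup H] [InnerProductSpace ℂ H] [CompleteSpace H]

/-- The functional calculus of a self-adjoint operator is monotone at the level of
quadratic forms. -/
theorem re_inner_cfc_le_re_inner_cfc (A : H →L[ℂ] H) {f g : ℝ → ℝ}
    (hf : Continuous f) (hg : Continuous g) (hfg : ∀ x ∈ spectrum ℝ A, f x ≤ g x) (z : H) :
    (inner ℂ (cfc f A z) z).re ≤ (inner ℂ (cfc g A z) z).re := by
  have hle : cfc f A ≤ cfc g A := cfc_mono hfg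
  have hpos := ((ContinuousLinearMap.le_def _ _).1 hle).re_inner_nonneg_left z
  simpa [inner_sub_left] using hpos

/-- For normal `N`, the norms of `N ^ n` on the range of the functional calculus of `N⋆ N`. -/
theorem norm_pow_cfc_apply_sq {N : H →L[ℂ] H} (hN : Commute (star N) N) {f : ℝ → ℝ}
    (hf : Continuous f) (n : ℕ) (z : H) :
    ‖(N ^ n) (cfc f (star N * N) z)‖ ^ 2 =
      (inner ℂ (cfc (fun x => x ^ n * (f x * f x)) (star N * N) z) z).re := by
  have hA : IsSelfAdjoint (star N * N) := .star_mul_self N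
  have hF : IsSelfAdjoint (cfc f (star N * N)) := cfc_predicate f _
  have hop : cfc (fun x => x ^ n * (f x * f x)) (star N * N) =
      star (N ^ n * cfc f (star N * N)) * (N ^ n * cfc f (star N * N)) := by
    have hcomm : Commute (cfc (fun x : ℝ => x ^ n) (star N * N)) (cfc f (star N * N)) :=
      cfc_commute_cfc _ _ _
    rw [cfc_mul (fun x : ℝ => x ^ n) (fun x => f x * f x) _ (by fun_prop) (by fun_prop),
      cfc_mul f f _ (by fun_prop) (by fun_prop), ← mul_assoc, hcomm.eq, cfc_pow_id _ n, hN.mul_pow,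
      star_mul, hF.star_eq, star_pow]
    simp only [mul_assoc]
  rw [hop, star_eq_adjoint (N ^ n * _)]
  change _ = (inner ℂ (adjoint (N ^ n * cfc f (star N * N)) _) z).re
  rw [adjoint_inner_left]
  exact (inner_self_eq_norm_sq (𝕜 := ℂ) _).symm

theorem mul_norm_cfc_apply_sq {N : H →L[ℂ] H} (hN : Commute (star N) N) {f : ℝ → ℝ}
    (hf : Continuous f) (c : ℝ) (z : H) :
    c * ‖cfc f (star N * N) z‖ ^ 2 =
      (inner ℂ (cfc (fun x => c * (f x * f x)) (star N * N) z) z).re := by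
  have hnorm := norm_pow_cfc_apply_sq hN hf 0 z
  simp only [pow_zero, one_mul] at hnorm
  change ‖cfc f (star N * N) z‖ ^ 2 = _ at hnorm
  rw [hnorm, cfc_const_mul c (fun x => f x * f x) _ (by fun_prop), smul_apply,
    ← Complex.coe_smul, inner_smul_left, Complex.conj_ofReal, Complex.re_ofReal_mul]

theorem norm_pow_cfc_apply_sq_le {N : H →L[ℂ] H} (hN : Commute (star N) N) {f : ℝ → ℝ}
    (hf : Continuous f) {v : ℝ} (hsupp : ∀ x, v ≤ x → f x = 0) (n : ℕ) (z : H) :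
    ‖(N ^ n) (cfc f (star N * N) z)‖ ^ 2 ≤ v ^ n * ‖cfc f (star N * N) z‖ ^ 2 := by
  rw [norm_pow_cfc_apply_sq hN hf, mul_norm_cfc_apply_sq hN hf]
  refine re_inner_cfc_le_re_inner_cfc _ (by fun_prop) (by fun_prop) (fun x hx => ?_) z
  have hx0 : 0 ≤ x := spectrum_nonneg_of_nonneg (star_mul_self_nonneg N) hx
  rcases le_total v x with h | h
  · simp [hsupp x h]
  · gcongr
    exact mul_self_nonneg _

theorem le_norm_pow_cfc_apply_sq {N : H →L[ℂ] H} (hN : Commute (star N) N) {f : ℝ → ℝ}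
    (hf : Continuous f) {u : ℝ} (hu : 0 ≤ u) (hsupp : ∀ x, x ≤ u → f x = 0) (n : ℕ) (z : H) :
    u ^ n * ‖cfc f (star N * N) z‖ ^ 2 ≤ ‖(N ^ n) (cfc f (star N * N) z)‖ ^ 2 := by
  rw [norm_pow_cfc_apply_sq hN hf, mul_norm_cfc_apply_sq hN hf]
  refine re_inner_cfc_le_re_inner_cfc _ (by fun_prop) (by fun_prop) (fun x hx => ?_) z
  rcases le_total x u with h | h
  · simp [hsupp x h]
  · gcongr
    exact mul_self_nonneg _

theorem cfc_ne_zero_of_mem_spectrum {A : H →L[ℂ] H} (hA : IsSelfAdjoint A) {f : ℝ → ℝ}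
    (hf : Continuous f) {s : ℝ} (hs : s ∈ spectrum ℝ A) (hfs : f s ≠ 0) : cfc f A ≠ 0 := by
  intro h
  rw [← cfc_zero ℝ A] at h
  exact hfs (eqOn_of_cfc_eq_cfc h (by fun_prop) (by fun_prop) hA hs)

/-- A spectral value of `N⋆ N` below `u` yields a nonzero vector stable under `u ^ (-1 / 2) N`. -/
theorem exists_ne_zero_tendsto_of_mem_spectrum {N : H →L[ℂ] H} (hN : Commute (star N) N)
    {s u : ℝ} (hs : s ∈ spectrum ℝ (star N * N)) (hsu : s < u) :
    ∃ y : H, y ≠ 0 ∧ Tendsto (fun n : ℕ => (√u)⁻¹ ^ n * ‖(N ^ n) y‖) atTop (𝓝 0) := by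
  obtain ⟨v, hsv, hvu⟩ := exists_between hsu
  have hs0 : 0 ≤ s := spectrum_nonneg_of_nonneg (star_mul_self_nonneg N) hs
  have hv0 : 0 < v := hs0.trans_lt hsv
  have hu0 : 0 < √u := Real.sqrt_pos.2 (hv0.trans hvu)
  set f : ℝ → ℝ := fun x => max (v - x) 0
  have hf : Continuous f := by fun_prop
  have hne : cfc f (star N * N) ≠ 0 :=
    cfc_ne_zero_of_mem_spectrum (.star_mul_self N) hf hs
      (lt_max_of_lt_left (sub_pos.2 hsv)).ne'
  obtain ⟨z, hz⟩ : ∃ z, cfc f (star N * N) z ≠ 0 := by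
    by_contra! h
    exact hne (ContinuousLinearMap.ext h)
  refine ⟨_, hz, ?_⟩
  set y := cfc f (star N * N) z
  have hratio : √v / √u < 1 := (div_lt_one hu0).2 (Real.sqrt_lt_sqrt hv0.le hvu)
  have hlim : Tendsto (fun n : ℕ => (√v / √u) ^ n * ‖y‖) atTop (𝓝 0) := by
    simpa using (tendsto_pow_atTop_nhds_zero_of_lt_one (by positivity) hratio).mul_const ‖y‖
  refine squeeze_zero (fun n => by positivity) (fun n => ?_) hlim
  have hbound : ‖(N ^ n) y‖ ≤ √v ^ n * ‖y‖ := by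
    refine le_of_sq_le_sq ?_ (by positivity)
    rw [mul_pow, pow_right_comm, Real.sq_sqrt hv0.le]
    exact norm_pow_cfc_apply_sq_le hN hf (fun x hx => max_eq_right (sub_nonpos.2 hx)) n z
  calc (√u)⁻¹ ^ n * ‖(N ^ n) y‖ ≤ (√u)⁻¹ ^ n * (√v ^ n * ‖y‖) := by gcongr
    _ = (√v / √u) ^ n * ‖y‖ := by rw [div_eq_inv_mul, mul_pow, mul_assoc]

/-- A spectral value of `N⋆ N` above `u` prevents the stable vectors of `u ^ (-1 / 2) N` from
being dense. -/
theorem not_dense_of_mem_spectrum {N : H →L[ℂ] H} (hN : Commute (star N) N)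
    {u t : ℝ} (hu : 0 < u) (ht : t ∈ spectrum ℝ (star N * N)) (hut : u < t) :
    ¬ Dense {y : H | Tendsto (fun n : ℕ => (√u)⁻¹ ^ n * ‖(N ^ n) y‖) atTop (𝓝 0)} := by
  intro hdense
  set g : ℝ → ℝ := fun x => max (x - u) 0
  have hg : Continuous g := by fun_prop
  have hu0 : 0 < √u := Real.sqrt_pos.2 hu
  refine cfc_ne_zero_of_mem_spectrum (.star_mul_self N) hg ht
    (lt_max_of_lt_left (sub_pos.2 hut)).ne' ?_
  set G := cfc g (star N * N)
  have hcomm (n : ℕ) : Commute G (N ^ n) :=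
    (Commute.cfc_real (hN.mul_left (Commute.refl N)) g).pow_right n
  have hzero : Set.EqOn G (0 : H →L[ℂ] H)
      {y : H | Tendsto (fun n : ℕ => (√u)⁻¹ ^ n * ‖(N ^ n) y‖) atTop (𝓝 0)} := by
    intro y hy
    have hlim : Tendsto (fun n : ℕ => ‖G‖ * ((√u)⁻¹ ^ n * ‖(N ^ n) y‖)) atTop (𝓝 0) := by
      simpa using Tendsto.const_mul ‖G‖ hy
    refine norm_le_zero_iff.1 (ge_of_tendsto' hlim fun n => ?_)
    have hbound : √u ^ n * ‖G y‖ ≤ ‖(N ^ n) (G y)‖ := by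
      refine le_of_sq_le_sq ?_ (norm_nonneg _)
      rw [mul_pow, pow_right_comm, Real.sq_sqrt hu.le]
      exact le_norm_pow_cfc_apply_sq hN hg hu.le
        (fun x hx => max_eq_right (sub_nonpos.2 hx)) n y
    have hswap : (N ^ n) (G y) = G ((N ^ n) y) := DFunLike.congr_fun (hcomm n).eq.symm y
    calc ‖G y‖ = (√u)⁻¹ ^ n * (√u ^ n * ‖G y‖) := by
          rw [← mul_assoc, ← mul_pow, inv_mul_cancel₀ hu0.ne', one_pow, one_mul]
      _ ≤ (√u)⁻¹ ^ n * (‖G‖ * ‖(N ^ n) y‖) :=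
          mul_le_mul_of_nonneg_left (hbound.trans (hswap ▸ G.le_opNorm _)) (by positivity)
      _ = ‖G‖ * ((√u)⁻¹ ^ n * ‖(N ^ n) y‖) := by ring
  exact DFunLike.coe_injective
    (Continuous.ext_on hdense G.continuous (0 : H →L[ℂ] H).continuous hzero)

end NormalOperator

theorem normal_with_dichotomy_is_multiple_of_unitary
    {H : Type*} [NormedAddCommGroup H] [InnerProductSpace ℂ H] [CompleteSpace H]
    [Nontrivial H]
    (N : H →L[ℂ] H)
    (hNormal : N ∘L ContinuousLinearMap.adjoint N = ContinuousLinearMap.adjoint N ∘L N)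
    (hN0 : N ≠ 0)
    (hStab : ∀ c : ℝ, 0 < c →
      ({x : H | Tendsto (fun n : ℕ => c ^ n * ‖(N ^ n) x‖) atTop (𝓝 0)} = {0} ∨
        Dense {x : H | Tendsto (fun n : ℕ => c ^ n * ‖(N ^ n) x‖) atTop (𝓝 0)})) :
    ∃ r : ℝ, 0 < r ∧
      ContinuousLinearMap.adjoint N ∘L N = ((r : ℂ) ^ 2) • (1 : H →L[ℂ] H) := by
  have hN : Commute (star N) N := hNormal.symm
  have hA : IsSelfAdjoint (star N * N) := .star_mul_self N
  have hnonneg : ∀ x ∈ spectrum ℝ (star N * N), 0 ≤ x := fun x hx =>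
    spectrum_nonneg_of_nonneg (star_mul_self_nonneg N) hx
  have hle : ∀ s ∈ spectrum ℝ (star N * N), ∀ t ∈ spectrum ℝ (star N * N), t ≤ s := by
    intro s hs t ht
    by_contra! hst
    obtain ⟨u, hsu, hut⟩ := exists_between hst
    have hu : 0 < u := (hnonneg s hs).trans_lt hsu
    rcases hStab (√u)⁻¹ (inv_pos.2 (Real.sqrt_pos.2 hu)) with h | h
    · obtain ⟨y, hy0, hy⟩ := exists_ne_zero_tendsto_of_mem_spectrum hN hs hsu
      exact hy0 (h.subset hy)
    · exact not_dense_of_mem_spectrum hN hu ht hut h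
  obtain ⟨s, hs⟩ : (spectrum ℝ (star N * N)).Nonempty :=
    ContinuousFunctionalCalculus.spectrum_nonempty _ hA
  have hscalar : star N * N = algebraMap ℝ (H →L[ℂ] H) s :=
    CFC.eq_algebraMap_of_spectrum_subset_singleton _ s
      (fun t ht => le_antisymm (hle s hs t ht) (hle t ht s hs)) hA
  have hs0 : 0 < s := by
    refine (hnonneg s hs).lt_of_ne' fun h => hN0 ?_
    rw [h, map_zero] at hscalar
    exact CStarRing.star_mul_self_eq_zero_iff N |>.1 hscalar
  refine ⟨√s, Real.sqrt_pos.2 hs0, ?_⟩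
  rw [← Complex.ofReal_pow, Real.sq_sqrt hs0.le, Complex.coe_smul, ← Algebra.algebraMap_eq_smul_one]
  exact hscalar
end
end
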